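/- arXiv:1607.06294 — 2 statements merged into one kernel-verified Lean document; each statement's English description precedes it below -/
import Mathlib

section
/- The reciprocal clustering method H^R satisfies the Axiom of Value (A1) and the Axiom of Transformation (A2). That is: (i) for the two-node network Δ₂(α,β) = ({p,q}, A) with A(p,q) = α, A(q,p) = β, α,β > 0, the reciprocal ultrametric satisfies u^R(p,q) = max(α,β); and (ii) for any two networks (X, A_X) and (Y, A_Y) and any map φ : X → Y with A_X(x,x') ≥ A_Y(φ(x),φ(x')) for all x,x' ∈ X, the reciprocal ultrametrics satisfy u^R_X(x,x') ≥ u^R_Y(φ(x),φ(x')) for all x,x' ∈ X. -/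
noncomputable section

/-- A dissimilarity function on a node set: nonnegative and zero exactly on the diagonal.
It need not be symmetric nor satisfy the triangle inequality. -/
def IsDissim {X : Type} (A : X → X → ℝ) : Prop :=
  (∀ x x', 0 ≤ A x x') ∧ (∀ x x', A x x' = 0 ↔ x = x')

/-- A symmetric dissimilarity. -/
def IsSym {X : Type} (A : X → X → ℝ) : Prop := ∀ x x', A x x' = A x' x

/-- An ultrametric: nonnegative, zero exactly on the diagonal, symmetric, and
satisfying the strong triangle inequality. -/
def IsUltrametric {X : Type} (u : X → X → ℝ) : Prop :=
  (∀ x x', 0 ≤ u x x') ∧ (∀ x x', u x x' = 0 ↔ x = x') ∧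
    (∀ x x', u x x' = u x' x) ∧
    (∀ x x' x'', u x x'' ≤ max (u x x') (u x' x''))

/-- The cost of the chain `x :: l`: the maximum dissimilarity over consecutive links. -/
def chainCost {X : Type} (A : X → X → ℝ) : X → List X → ℝ
  | _, [] => 0
  | x, y :: l => max (A x y) (chainCost A y l)

/-- The set of costs of chains from `x` to `x'`. -/
def chainCosts {X : Type} (A : X → X → ℝ) (x x' : X) : Set ℝ :=
  {c | ∃ l : List X, (x :: l).getLast (List.cons_ne_nil x l) = x' ∧ chainCost A x l = c}

/-- The directed minimum chain cost `ũ*_X(x,x')`: minimum cost over all chains from `x` to `x'`. -/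
def minChainCost {X : Type} (A : X → X → ℝ) (x x' : X) : ℝ :=
  sInf (chainCosts A x x')

/-- The nonreciprocal ultrametric `u^NR`. -/
def nonrecipUltra {X : Type} (A : X → X → ℝ) (x x' : X) : ℝ :=
  max (minChainCost A x x') (minChainCost A x' x)

/-- The reciprocal ultrametric `u^R`. -/
def recipUltra {X : Type} (A : X → X → ℝ) (x x' : X) : ℝ :=
  minChainCost (fun a b => max (A a b) (A b a)) x x'

/-- The unilateral ultrametric `u^U`. -/
def uniUltra {X : Type} (A : X → X → ℝ) (x x' : X) : ℝ :=
  minChainCost (fun a b => min (A a b) (A b a)) x x'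

/-- The minimum loop cost `mlc(X, A_X)`: minimum cost over loops, i.e. chains from some
node `x` back to itself containing at least one node different from `x`. -/
def mlc {X : Type} (A : X → X → ℝ) : ℝ :=
  sInf {c | ∃ (x : X) (l : List X),
    (x :: l).getLast (List.cons_ne_nil x l) = x ∧ (∃ y ∈ l, y ≠ x) ∧ chainCost A x l = c}

/-- The separation `sep(X, A_X)`: minimum dissimilarity over pairs of distinct nodes. -/
def sep {X : Type} (A : X → X → ℝ) : ℝ :=
  sInf {c | ∃ x x' : X, x ≠ x' ∧ A x x' = c}

/-- A hierarchical clustering method: assigns to every (finite) network an output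
two-variable function on the same node set. -/
abbrev HCMethod := ∀ (X : Type) [Fintype X], (X → X → ℝ) → X → X → ℝ

/-- A hierarchical clustering method outputs an ultrametric on every network. -/
def IsHCMethod (H : HCMethod) : Prop :=
  ∀ (X : Type) [Fintype X] (A : X → X → ℝ), IsDissim A → IsUltrametric (H X A)

/-- `p, q` are the two (distinct) nodes of a two-node set. -/
def TwoNode {X : Type} (p q : X) : Prop := p ≠ q ∧ ∀ x : X, x = p ∨ x = q

/-- Axiom of Value (A1): on every two-node network the output clusters the two nodes at
the maximum of the two dissimilarities. -/
def AxiomValue (H : HCMethod) : Prop :=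
  ∀ (X : Type) [Fintype X] (p q : X), TwoNode p q →
    ∀ A : X → X → ℝ, IsDissim A → H X A p q = max (A p q) (A q p)

/-- Axiom of Transformation (A2): dissimilarity-reducing maps do not increase output values. -/
def AxiomTransform (H : HCMethod) : Prop :=
  ∀ (X Y : Type) [Fintype X] [Fintype Y] (AX : X → X → ℝ) (AY : Y → Y → ℝ),
    IsDissim AX → IsDissim AY →
    ∀ φ : X → Y, (∀ x x', AY (φ x) (φ x') ≤ AX x x') →
    ∀ x x' : X, H Y AY (φ x) (φ x') ≤ H X AX x x'

/-- The canonical dissimilarity `A_{n,α,β}` on `Fin n`: `α` for `i > j`, `β` for `i < j`,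
`0` on the diagonal. -/
def canonDissim (n : ℕ) (α β : ℝ) : Fin n → Fin n → ℝ :=
  fun i j => if i = j then 0 else if j < i then α else β

/-- Extended Axiom of Value (A1'): on every permuted canonical network `Δ_n(α,β,Π)` the
output ultrametric equals `max(α,β)` off the diagonal. -/
def ExtAxiomValue (H : HCMethod) : Prop :=
  ∀ (n : ℕ) (α β : ℝ), 0 < α → 0 < β → ∀ π : Equiv.Perm (Fin n),
    ∀ i j : Fin n, i ≠ j →
      H (Fin n) (fun i j => canonDissim n α β (π i) (π j)) i j = max α β

/-- Alternative Axiom of Value (A1''): on every two-node network the output clusters the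
two nodes at the minimum of the two dissimilarities. -/
def AltAxiomValue (H : HCMethod) : Prop :=
  ∀ (X : Type) [Fintype X] (p q : X), TwoNode p q →
    ∀ A : X → X → ℝ, IsDissim A → H X A p q = min (A p q) (A q p)

/-- Agnostic Axiom of Value (A1'''): on every two-node network the output value lies
between the minimum and maximum of the two dissimilarities. -/
def AgnAxiomValue (H : HCMethod) : Prop :=
  ∀ (X : Type) [Fintype X] (p q : X), TwoNode p q →
    ∀ A : X → X → ℝ, IsDissim A →
      min (A p q) (A q p) ≤ H X A p q ∧ H X A p q ≤ max (A p q) (A q p)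

theorem chainCost_nonneg_aux {X : Type} (A : X → X → ℝ) (x : X) (l : List X) (hA : ∀ a b, 0 ≤ A a b) :
    0 ≤ chainCost A x l := by
  cases l with
  | nil => exact le_rfl
  | cons y l => exact le_trans (hA x y) (le_max_left _ _)

theorem chainCosts_bddBelow_aux {X : Type} (A : X → X → ℝ) (x x' : X) (hA : ∀ a b, 0 ≤ A a b) :
    BddBelow (chainCosts A x x') := by
  refine ⟨0, ?_⟩
  rintro c ⟨l, -, rfl⟩
  exact chainCost_nonneg_aux A x l hA

theorem chainCosts_nonempty_aux {X : Type} (A : X → X → ℝ) (x x' : X) :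
    (chainCosts A x x').Nonempty := ⟨_, [x'], by simp, rfl⟩

theorem chainCost_two_aux {X : Type} (B : X → X → ℝ) (p q : X) (h : TwoNode p q) (l : List X)
    (hl : (p :: l).getLast (List.cons_ne_nil p l) = q) : B p q ≤ chainCost B p l := by
  induction l with
  | nil => exact absurd (by simpa using hl) h.1
  | cons y l ih =>
    rcases h.2 y with rfl | rfl
    · exact le_trans (ih (by simpa using hl)) (le_max_right _ _)
    · exact le_max_left _ _

theorem chainCost_map_aux {X Y : Type} (A : X → X → ℝ) (B : Y → Y → ℝ) (φ : X → Y)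
    (h : ∀ a b, B (φ a) (φ b) ≤ A a b) (l : List X) :
    ∀ x, chainCost B (φ x) (l.map φ) ≤ chainCost A x l := by
  induction l with
  | nil => intro x; exact le_rfl
  | cons y l ih => intro x; exact max_le_max (h x y) (ih y)

/-- Reciprocal clustering satisfies the Axiom of Value (A1) and the Axiom of
Transformation (A2). -/
theorem recip_admissible :
    (∀ (X : Type) [Fintype X] (p q : X), TwoNode p q →
        ∀ A : X → X → ℝ, IsDissim A → recipUltra A p q = max (A p q) (A q p)) ∧
    (∀ (X Y : Type) [Fintype X] [Fintype Y]
        (AX : X → X → ℝ) (AY : Y → Y → ℝ), IsDissim AX → IsDissim AY →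
        ∀ φ : X → Y, (∀ x x', AY (φ x) (φ x') ≤ AX x x') →
        ∀ x x' : X, recipUltra AY (φ x) (φ x') ≤ recipUltra AX x x') := by
  constructor
  · intro X _ p q h A hA
    have h0 : ∀ a b, 0 ≤ max (A a b) (A b a) := fun a b => le_max_of_le_left (hA.1 a b)
    apply le_antisymm
    · refine csInf_le (chainCosts_bddBelow_aux _ p q h0) ⟨[q], by simp, ?_⟩
      exact max_eq_left (h0 p q)
    · refine le_csInf (chainCosts_nonempty_aux _ p q) ?_
      rintro c ⟨l, hl, rfl⟩
      exact chainCost_two_aux (fun a b => max (A a b) (A b a)) p q h l hl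
  · intro X Y _ _ AX AY hX hY φ hφ x x'
    refine le_csInf (chainCosts_nonempty_aux _ x x') ?_
    rintro c ⟨l, hl, rfl⟩
    refine le_trans (csInf_le (chainCosts_bddBelow_aux _ _ _
      (fun a b => le_max_of_le_left (hY.1 a b))) ⟨l.map φ, ?_, rfl⟩)
      (chainCost_map_aux _ _ φ (fun a b => max_le_max (hφ a b) (hφ b a)) l x)
    subst hl
    simp only [← List.map_cons, List.getLast_map]
end
end

section
/- Let H be a hierarchical clustering method satisfying the Alternative Axiom of Value (A1'') and the Axiom of Transformation (A2). Then H is equivalent to the unilateral clustering method H^U: for every network (X, A_X), writing u_X = H(X, A_X), it holds that u_X(x,x') = u^U_X(x,x') for all x, x' ∈ X. -/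
noncomputable section

/-- A two-node dissimilarity on `Bool`. -/
def twoDis (α β : ℝ) : Bool → Bool → ℝ
  | false, true => α
  | true, false => β
  | _, _ => 0

theorem twoDis_isDissim {α β : ℝ} (ha : 0 < α) (hb : 0 < β) : IsDissim (twoDis α β) := by
  constructor
  · intro a b
    cases a <;> cases b <;> simp [twoDis, ha.le, hb.le]
  · intro a b
    cases a <;> cases b <;> simp [twoDis, ha.ne', hb.ne']

theorem twoNode_bool : TwoNode false true := by
  constructor
  · simp
  · intro b
    cases b <;> simp

theorem H_twoDis {H : HCMethod} (hV : AltAxiomValue H) {α β : ℝ} (ha : 0 < α) (hb : 0 < β) :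
    H Bool (twoDis α β) false true = min α β :=
  hV Bool false true twoNode_bool _ (twoDis_isDissim ha hb)

theorem dissim_pos {X : Type} {A : X → X → ℝ} (hA : IsDissim A) {x y : X} (h : x ≠ y) :
    0 < A x y :=
  lt_of_le_of_ne (hA.1 x y) (fun e => h ((hA.2 x y).1 e.symm))

theorem H_le_min {H : HCMethod} (hH : IsHCMethod H) (hV : AltAxiomValue H)
    (hT : AxiomTransform H) {X : Type} [Fintype X] {A : X → X → ℝ} (hA : IsDissim A) (x y : X) :
    H X A x y ≤ min (A x y) (A y x) := by
  by_cases h : x = y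
  · subst h
    rw [((hH X A hA).2.1 x x).2 rfl]
    simpa using hA.1 x x
  · have ha := dissim_pos hA h
    have hb := dissim_pos hA (Ne.symm h)
    rw [← H_twoDis hV ha hb]
    have h0 : ∀ z, A z z = 0 := fun z => (hA.2 z z).2 rfl
    have := hT Bool X (twoDis (A x y) (A y x)) A (twoDis_isDissim ha hb) hA
      (fun b => cond b y x) (by
        intro a b
        cases a <;> cases b <;> simp [twoDis, h0]) false true
    simpa using this

theorem H_le_chain {H : HCMethod} (hH : IsHCMethod H) (hV : AltAxiomValue H)
    (hT : AxiomTransform H) {X : Type} [Fintype X] {A : X → X → ℝ} (hA : IsDissim A)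
    (l : List X) : ∀ x : X, H X A x ((x :: l).getLast (List.cons_ne_nil x l)) ≤
      chainCost (fun a b => min (A a b) (A b a)) x l := by
  induction l with
  | nil =>
    intro x
    simp only [List.getLast_singleton, chainCost]
    exact (((hH X A hA).2.1 x x).2 rfl).le
  | cons y l ih =>
    intro x
    rw [List.getLast_cons (List.cons_ne_nil y l)]
    refine ((hH X A hA).2.2.2 x y _).trans ?_
    exact max_le_max (H_le_min hH hV hT hA x y) (ih y)

theorem chainCost_nonneg {X : Type} {A : X → X → ℝ} (hA : ∀ x y, 0 ≤ A x y) (l : List X) (x : X) :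
    0 ≤ chainCost A x l := by
  cases l with
  | nil => exact le_rfl
  | cons y l => exact (hA x y).trans (le_max_left _ _)

theorem chainCosts_bddBelow {X : Type} {A : X → X → ℝ} (hA : ∀ x y, 0 ≤ A x y) (x y : X) :
    BddBelow (chainCosts A x y) := by
  refine ⟨0, ?_⟩
  rintro c ⟨l, -, rfl⟩
  exact chainCost_nonneg hA l x

/-- Any method satisfying (A1'') and (A2) coincides with unilateral clustering. -/
theorem unilateral_unique
    (H : HCMethod) (hH : IsHCMethod H) (hA1'' : AltAxiomValue H) (hA2 : AxiomTransform H)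
    (X : Type) [Fintype X] (A : X → X → ℝ) (hA : IsDissim A) (x x' : X) :
    H X A x x' = uniUltra A x x' := by
  have hm : ∀ a b, 0 ≤ min (A a b) (A b a) := fun a b => le_min (hA.1 a b) (hA.1 b a)
  apply le_antisymm
  · refine le_csInf ⟨_, [x'], by simp, rfl⟩ ?_
    rintro c ⟨l, hl, rfl⟩
    have := H_le_chain hH hA1'' hA2 hA l x
    rwa [hl] at this
  · rcases le_or_gt (uniUltra A x x') 0 with h0 | hpos
    · exact h0.trans ((hH X A hA).1 x x')
    · classical
      set δ := uniUltra A x x' with hδ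
      let S : X → Prop := fun z => ∃ c ∈ chainCosts (fun a b => min (A a b) (A b a)) z x', c < δ
      have hx' : S x' := ⟨0, ⟨[], by simp, rfl⟩, hpos⟩
      have hx : ¬ S x := by
        rintro ⟨c, hc, hlt⟩
        exact absurd (csInf_le (chainCosts_bddBelow hm x x') hc) (not_le.2 hlt)
      have key : ∀ z w, ¬ S z → S w → δ ≤ min (A z w) (A w z) := by
        rintro z w hz ⟨c, ⟨l, hl, rfl⟩, hlt⟩
        by_contra hcon
        refine hz ⟨_, ⟨w :: l, ?_, rfl⟩, max_lt (not_le.1 hcon) hlt⟩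
        rw [List.getLast_cons (List.cons_ne_nil w l)]
        exact hl
      have := hA2 X Bool A (twoDis δ δ) hA (twoDis_isDissim hpos hpos)
        (fun z => decide (S z)) (by
          intro z w
          by_cases hz : S z <;> by_cases hw : S w
          · simpa [hz, hw, twoDis] using hA.1 z w
          · simpa [hz, hw, twoDis] using (key w z hw hz).trans (min_le_right _ _)
          · simpa [hz, hw, twoDis] using (key z w hz hw).trans (min_le_left _ _)
          · simpa [hz, hw, twoDis] using hA.1 z w) x x'
      simp only [hx, hx', decide_true, decide_false] at this
      rwa [H_twoDis hA1'' hpos hpos, min_self] at this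
end
end
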